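/- Let c be a codeword of the p-ary dual code of points and lines of the Hermitian variety H(5,q^2) with weight at most 2(q^3+q^2), and let pi be a plane of PG(5,q^2) contained in H(5,q^2). Then pi contains at most 2q^2+2q+2 points of the support of c. -/

import Mathlib

/-!
Write `x` for the number of support points in the plane `π`, and count the collinear pairs `(P, Q)`
of support points with `P` in `π` and `Q` outside `π`.

A point `Q` outside `π` is orthogonal to at most a line of `π`, because `π` is its own orthogonal
space; so it is collinear with at most `q² + 1` points of `π` (`card_collinear_le`).

For a support point `P` of `π`, choose a basis `p, w₁, w₂` of `π` with `p` spanning `P`, and an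
isotropic pair `u₁, u₂` orthogonal to `p` and dual to `w₁, w₂` (`exists_frame`). The spans of
`p, u₁ + a w₁ + b w₂, u₂ - b^q w₁ + d w₂`, with `b` arbitrary and `a, d` of trace zero over `F_q`,
are `q⁴` planes of the variety meeting `π` exactly in `P`. Each contains a second support point,
which is then collinear with `P` and outside `π`, and such a point lies in at most `q` of these
planes (`opp_fiber`). Hence `P` is collinear with at least `q³` support points outside `π`
(`le_card_collinear`).

Altogether `x q³ ≤ (wt(c) - x)(q² + 1)` with `wt(c) ≤ 2(q³ + q²)`, which gives the bound.
-/

open scoped Classical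

noncomputable section

variable (K : Type*) [Field K] [Fintype K]

/-- The standard Hermitian form `∑ xᵢ^{q+1}` on `K^6` (`K = F_{q²}`),
defining `H(5,q²)`. -/
def H5Form (q : ℕ) : (Fin 6 → K) → K := fun v => ∑ j : Fin 6, v j ^ (q + 1)

/-- Points of the Hermitian variety `H(5,q²)`. -/
def H5Point (q : ℕ) := {W : Submodule K (Fin 6 → K) //
  Module.finrank K W = 1 ∧ ∀ v ∈ W, H5Form K q v = 0}

/-- Generators (planes) of `H(5,q²)`: 3-dimensional subspaces contained in the variety. -/
def H5Plane (q : ℕ) := {W : Submodule K (Fin 6 → K) //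
  Module.finrank K W = 3 ∧ ∀ v ∈ W, H5Form K q v = 0}

set_option linter.unusedSectionVars false

section
variable {K}

/-! ### The involution of `F_{q²}` and its trace -/

/-- The Hermitian (sesquilinear) form `∑ uⱼ vⱼ^q` on `K^6`, linear in its first argument. Its
values on the diagonal are `H5Form`, and two points of `H(5,q²)` are collinear when it vanishes
on their representatives. -/
def hb (q : ℕ) (u v : Fin 6 → K) : K := ∑ j : Fin 6, u j * v j ^ q

/-- `K` has order `q²` and `x ↦ x^q` is an additive involution, that is, the involutory
automorphism of `F_{q²}`. -/
structure QConj (K : Type*) [Field K] [Fintype K] (q : ℕ) : Prop where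
  two_le : 2 ≤ q
  card : Fintype.card K = q ^ 2
  add : ∀ x y : K, (x + y) ^ q = x ^ q + y ^ q
  inv : ∀ x : K, (x ^ q) ^ q = x

namespace QConj

variable {q : ℕ} (hQ : QConj K q)
include hQ

lemma neg (x : K) : (-x) ^ q = -x ^ q := by
  have h := hQ.add x (-x)
  rw [add_neg_cancel, zero_pow (by have := hQ.two_le; omega)] at h
  exact eq_neg_of_add_eq_zero_right h.symm

lemma sub (x y : K) : (x - y) ^ q = x ^ q - y ^ q := by
  rw [sub_eq_add_neg, hQ.add, hQ.neg, sub_eq_add_neg]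

lemma zero_pow : (0 : K) ^ q = 0 := _root_.zero_pow (by have := hQ.two_le; omega)

lemma pow_inj {x y : K} (h : x ^ q = y ^ q) : x = y := by
  rw [← hQ.inv x, h, hQ.inv]

lemma card_le_roots (e : K) : Fintype.card {x : K // x ^ q + e * x = 0} ≤ q := by
  open Polynomial in
  have h2 := hQ.two_le
  have hdeg : (X ^ q + C e * X : K[X]).natDegree = q := by
    compute_degree!
    · rw [if_neg (by omega)]; simp
    · omega
    · omega
  have hne : (X ^ q + C e * X : K[X]) ≠ 0 := by
    intro h; rw [h] at hdeg; simp at hdeg; omega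
  rw [Fintype.card_subtype]
  refine (Finset.card_le_card (t := (X ^ q + C e * X : K[X]).roots.toFinset) ?_).trans
    ((Multiset.toFinset_card_le _).trans ((Polynomial.card_roots' _).trans hdeg.le))
  intro x hx
  simp only [Finset.mem_filter, Finset.mem_univ, true_and] at hx
  simp [hne, hx]

lemma fix_card_le : {x : K | x ^ q = x}.ncard ≤ q := by
  refine le_trans (le_of_eq ?_) (hQ.card_le_roots (-1))
  rw [← Nat.card_eq_fintype_card]
  refine Nat.card_congr (Equiv.subtypeEquivRight fun x => ?_)
  change x ^ q = x ↔ _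
  rw [neg_one_mul, ← sub_eq_add_neg, sub_eq_zero]

/-- The trace `a ↦ a + a^q` from `F_{q²}` to `F_q`. -/
def tr : K →+ K where
  toFun a := a + a ^ q
  map_zero' := by simp [hQ.zero_pow]
  map_add' x y := by rw [hQ.add]; ring

lemma tr_card_aux : Nat.card hQ.tr.ker ≤ q ∧ Nat.card hQ.tr.range * Nat.card hQ.tr.ker = q ^ 2 := by
  constructor
  · refine le_trans (le_of_eq ?_) (hQ.card_le_roots 1)
    rw [← Nat.card_eq_fintype_card]
    refine Nat.card_congr (Equiv.subtypeEquivRight fun x => ?_)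
    rw [AddMonoidHom.mem_ker, one_mul, add_comm]; rfl
  · rw [← AddSubgroup.index_ker, mul_comm, AddSubgroup.card_mul_index, Nat.card_eq_fintype_card,
      hQ.card]

/-- The kernel and the image of the trace both have at most `q` elements, being sets of roots of
`X^q + X` and `X^q - X`, and the product of their orders is `q²`. -/
lemma tr_card : Nat.card hQ.tr.ker = q ∧ Nat.card hQ.tr.range = q ∧
    ∀ e : K, e ^ q = e → ∃ a : K, a + a ^ q = e := by
  have h2 := hQ.two_le
  obtain ⟨h1, h3⟩ := hQ.tr_card_aux
  have hsub : (hQ.tr.range : Set K) ⊆ {x | x ^ q = x} := by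
    rintro _ ⟨a, rfl⟩
    change (a + a ^ q) ^ q = a + a ^ q
    rw [hQ.add, hQ.inv, add_comm]
  have hS := hQ.fix_card_le
  have hle : Nat.card hQ.tr.range ≤ q :=
    (Set.ncard_le_ncard hsub (Set.toFinite _)).trans hS
  have hr : Nat.card hQ.tr.range = q := by nlinarith
  refine ⟨by rw [hr] at h3; nlinarith, hr, fun e he => ?_⟩
  have heq := Set.eq_of_subset_of_ncard_le hsub (hS.trans hr.ge) (Set.toFinite _)
  have : e ∈ (hQ.tr.range : Set K) := heq ▸ he
  exact this

/-- The trace maps onto the fixed elements of `x ↦ x^q`. -/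
lemma trace_surj (e : K) (he : e ^ q = e) : ∃ a : K, a + a ^ q = e := hQ.tr_card.2.2 e he

/-- There are exactly `q` elements of trace zero. -/
lemma card_trace_zero : (Finset.univ.filter fun a : K => a + a ^ q = 0).card = q := by
  conv_rhs => rw [← hQ.tr_card.1]
  rw [Nat.card_eq_fintype_card, ← Fintype.card_subtype]
  exact Fintype.card_congr (Equiv.subtypeEquivRight fun x => Iff.rfl)

lemma exists_not_fixed : ∃ l : K, l ^ q ≠ l := by
  by_contra! h
  have h2 := hQ.two_le
  have h1 := hQ.fix_card_le
  have : {x : K | x ^ q = x} = Set.univ := by ext x; simp [h]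
  rw [this, Set.ncard_univ, Nat.card_eq_fintype_card, hQ.card] at h1
  nlinarith

end QConj

/-! ### Linear algebra of the Hermitian form -/

variable {q : ℕ}

lemma H5Form_eq (v : Fin 6 → K) : H5Form K q v = hb q v v := by
  simp [H5Form, hb, pow_succ']

lemma hb_add_left (u v w : Fin 6 → K) : hb q (u + v) w = hb q u w + hb q v w := by
  simp [hb, add_mul, Finset.sum_add_distrib]

lemma hb_smul_left (a : K) (u v : Fin 6 → K) : hb q (a • u) v = a * hb q u v := by
  simp [hb, Finset.mul_sum, mul_assoc]

lemma hb_add_right (hQ : QConj K q) (u v w : Fin 6 → K) :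
    hb q u (v + w) = hb q u v + hb q u w := by
  simp [hb, hQ.add, mul_add, Finset.sum_add_distrib]

lemma hb_smul_right (a : K) (u v : Fin 6 → K) : hb q u (a • v) = a ^ q * hb q u v := by
  simp only [hb, Finset.mul_sum, Pi.smul_apply, smul_eq_mul, mul_pow]
  exact Finset.sum_congr rfl fun _ _ => by ring

lemma hb_conj (hQ : QConj K q) (u v : Fin 6 → K) : hb q u v ^ q = hb q v u := by
  let f : K →+ K := ⟨⟨fun x => x ^ q, hQ.zero_pow⟩, hQ.add⟩
  have : f (hb q u v) = ∑ j : Fin 6, f (u j * v j ^ q) := map_sum f _ _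
  refine this.trans (Finset.sum_congr rfl fun j _ => ?_)
  change (u j * v j ^ q) ^ q = _
  rw [mul_pow, hQ.inv, mul_comm]

/-- `hb q · w` as a linear functional. -/
def hbL (q : ℕ) (w : Fin 6 → K) : (Fin 6 → K) →ₗ[K] K where
  toFun v := hb q v w
  map_add' u v := hb_add_left u v w
  map_smul' a u := hb_smul_left a u w

lemma hb_nondeg (hQ : QConj K q) {w : Fin 6 → K} (h : ∀ x, hb q x w = 0) : w = 0 := by
  funext j
  have := h (Pi.single j 1)
  rw [hb, Finset.sum_eq_single j] at this
  · apply hQ.pow_inj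
    simpa [hQ.zero_pow] using this
  · intro i _ hi; simp [hi]
  · simp

/-- Polarisation: the sesquilinear form vanishes identically on a subspace contained in the
variety. -/
lemma hb_eq_zero (hQ : QConj K q) {W : Submodule K (Fin 6 → K)}
    (hW : ∀ v ∈ W, H5Form K q v = 0) {v w : Fin 6 → K} (hv : v ∈ W) (hw : w ∈ W) :
    hb q v w = 0 := by
  obtain ⟨l, hl⟩ := hQ.exists_not_fixed
  have key : ∀ a : K, a * hb q v w + a ^ q * hb q w v = 0 := by
    intro a
    have h := hW _ (W.add_mem (W.smul_mem a hv) hw)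
    have hvv := hW _ hv
    have hww := hW _ hw
    rw [H5Form_eq] at h hvv hww
    simp only [hb_add_left, hb_add_right hQ, hb_smul_left, hb_smul_right, hvv, hww] at h
    linear_combination h
  have h1 := key 1
  have h2 := key l
  -- `key` for `1` and for an element `l` with `l^q ≠ l` determines `hb q v w`.
  have h3 : (l ^ q - l) * hb q v w = 0 := by
    linear_combination l ^ q * h1 - h2
  exact (mul_eq_zero.1 h3).resolve_left (sub_ne_zero.2 hl)

/-- The values of the form against linearly independent vectors can be prescribed. -/
lemma exists_dual (hQ : QConj K q) {w : Fin 3 → Fin 6 → K} (hw : LinearIndependent K w)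
    (t : Fin 3 → K) : ∃ x, ∀ j, hb q x (w j) = t j := by
  let L : (Fin 6 → K) →ₗ[K] (Fin 3 → K) := LinearMap.pi fun j => hbL q (w j)
  suffices h : LinearMap.range L = ⊤ by
    obtain ⟨x, hx⟩ := LinearMap.range_eq_top.1 h t
    exact ⟨x, fun j => congrFun hx j⟩
  by_contra hne
  obtain ⟨g, hg0, hg⟩ := Submodule.exists_le_ker_of_lt_top _ (lt_top_iff_ne_top.2 hne)
  have h1 : ∀ t, g t = ∑ j, t j * g (Pi.single j 1) := by
    intro t
    conv_lhs => rw [LinearMap.pi_apply_eq_sum_univ g t]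
    refine Finset.sum_congr rfl fun j _ => ?_
    rw [smul_eq_mul]; congr 2; ext i; simp [Pi.single_apply, eq_comm]
  -- A relation `∑ gⱼ hb x wⱼ = 0` for all `x` says that `∑ gⱼ^q wⱼ` is in the radical.
  have h2 : ∑ j, (g (Pi.single j 1)) ^ q • w j = 0 := by
    apply hb_nondeg hQ
    intro x
    have hx : g (L x) = 0 := hg ⟨x, rfl⟩
    rw [h1] at hx
    have hL : ∀ j, L x j = hb q x (w j) := fun j => rfl
    simp only [Fin.sum_univ_three, hL] at hx ⊢
    simp only [hb_add_right hQ, hb_smul_right, hQ.inv]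
    linear_combination hx
  have h3 := Fintype.linearIndependent_iff.1 hw _ h2
  apply hg0
  ext j
  have : g (Pi.single j 1) = 0 := hQ.pow_inj (by rw [h3 j, hQ.zero_pow])
  simpa using this

/-- A plane contained in the variety is its own orthogonal space. -/
lemma mem_of_orthogonal (hQ : QConj K q) {W : Submodule K (Fin 6 → K)}
    (hd : Module.finrank K W = 3) (hW : ∀ v ∈ W, H5Form K q v = 0) {x : Fin 6 → K}
    (hx : ∀ w ∈ W, hb q x w = 0) : x ∈ W := by
  let b := Module.finBasisOfFinrankEq K W hd
  have hb : LinearIndependent K (fun j => (b j : Fin 6 → K)) :=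
    b.linearIndependent.map' W.subtype W.ker_subtype
  let L : (Fin 6 → K) →ₗ[K] (Fin 3 → K) := LinearMap.pi fun j => hbL q (b j : Fin 6 → K)
  have hL : LinearMap.range L = ⊤ := by
    rw [LinearMap.range_eq_top]
    intro t
    obtain ⟨x, hx⟩ := exists_dual hQ hb t
    exact ⟨x, funext hx⟩
  have h1 := LinearMap.finrank_range_add_finrank_ker L
  rw [hL] at h1
  simp only [finrank_top, Module.finrank_fin_fun] at h1
  have hle : W ≤ LinearMap.ker L := fun w hw => by
    rw [LinearMap.mem_ker]
    funext j
    exact hb_eq_zero hQ hW hw (b j).2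
  have := Submodule.eq_of_le_of_finrank_eq hle (by omega)
  rw [this, LinearMap.mem_ker]
  funext j
  exact hx _ (b j).2

/-- A hyperbolic frame: a basis `p, w₁, w₂` of the plane `W`, and an isotropic pair `u₁, u₂`
orthogonal to `p` and dual to `w₁, w₂`. -/
structure Frame (q : ℕ) (W : Submodule K (Fin 6 → K)) (p w₁ w₂ u₁ u₂ : Fin 6 → K) : Prop where
  indep : LinearIndependent K ![w₂, w₁, p]
  mem : ∀ x, x ∈ W ↔ ∃ a b c : K, a • p + b • w₁ + c • w₂ = x
  u₁p : hb q u₁ p = 0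
  u₁w₁ : hb q u₁ w₁ = 1
  u₁w₂ : hb q u₁ w₂ = 0
  u₂p : hb q u₂ p = 0
  u₂w₁ : hb q u₂ w₁ = 0
  u₂w₂ : hb q u₂ w₂ = 1
  u₁u₁ : hb q u₁ u₁ = 0
  u₁u₂ : hb q u₁ u₂ = 0
  u₂u₂ : hb q u₂ u₂ = 0

lemma exists_frame (hQ : QConj K q) {W : Submodule K (Fin 6 → K)}
    (hd : Module.finrank K W = 3) (hW : ∀ v ∈ W, H5Form K q v = 0) {p : Fin 6 → K}
    (hp : p ∈ W) (hp0 : p ≠ 0) : ∃ w₁ w₂ u₁ u₂, Frame q W p w₁ w₂ u₁ u₂ := by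
  have h0 : LinearIndependent K ![(⟨p, hp⟩ : W)] := by
    rw [linearIndependent_unique_iff]
    simpa [Subtype.ext_iff] using hp0
  obtain ⟨w₁, h1⟩ := exists_linearIndependent_cons_of_lt_finrank h0 (by omega)
  obtain ⟨w₂, h2⟩ := exists_linearIndependent_cons_of_lt_finrank h1 (by omega)
  have hspan := h2.span_eq_top_of_card_eq_finrank (by simp [hd])
  have hind : LinearIndependent K ![(w₂ : Fin 6 → K), w₁, p] := by
    have := h2.map' W.subtype W.ker_subtype
    have hv : ![(w₂ : Fin 6 → K), w₁, p] =
        W.subtype ∘ (Fin.cons w₂ (Fin.cons w₁ ![(⟨p, hp⟩ : W)]) : Fin 3 → W) := by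
      funext j; fin_cases j <;> rfl
    rw [hv]
    exact this
  have hmem : ∀ x, x ∈ W ↔ ∃ a b c : K, a • p + b • (w₁ : Fin 6 → K) + c • (w₂ : Fin 6 → K) = x := by
    intro x
    constructor
    · intro hx
      have : (⟨x, hx⟩ : W) ∈ (⊤ : Submodule K W) := trivial
      rw [← hspan, Submodule.mem_span_range_iff_exists_fun] at this
      obtain ⟨c, hc⟩ := this
      refine ⟨c 2, c 1, c 0, ?_⟩
      have := congrArg Subtype.val hc
      simp [Fin.sum_univ_three] at this
      rw [← this]
      abel
    · rintro ⟨a, b, c, rfl⟩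
      exact W.add_mem (W.add_mem (W.smul_mem _ hp) (W.smul_mem _ w₁.2)) (W.smul_mem _ w₂.2)
  obtain ⟨y₁, hy₁⟩ := exists_dual hQ hind ![0, 1, 0]
  obtain ⟨y₂, hy₂⟩ := exists_dual hQ hind ![1, 0, 0]
  have hz : ∀ {v w}, v ∈ W → w ∈ W → hb q v w = 0 := hb_eq_zero hQ hW
  have a1 := hy₁ 0
  have a2 := hy₁ 1
  have a3 := hy₁ 2
  have b1 := hy₂ 0
  have b2 := hy₂ 1
  have b3 := hy₂ 2
  simp at a1 a2 a3 b1 b2 b3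
  have hflip : ∀ {u v : Fin 6 → K} {a : K}, hb q u v = a → hb q v u = a ^ q := fun h => by
    rw [← hb_conj hQ, h]
  -- Correct `y₁, y₂` by vectors of `W` to make them isotropic and orthogonal.
  obtain ⟨e₁, he₁⟩ := hQ.trace_surj (-hb q y₁ y₁) (by rw [hQ.neg, hb_conj hQ])
  obtain ⟨e₂, he₂⟩ := hQ.trace_surj (-hb q y₂ y₂) (by rw [hQ.neg, hb_conj hQ])
  have c₁ := hz w₁.2 hp
  have c₂ := hz w₁.2 w₁.2
  have c₃ := hz w₁.2 w₂.2
  have c₄ := hz w₂.2 hp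
  have c₅ := hz w₂.2 w₁.2
  have c₆ := hz w₂.2 w₂.2
  have d₁ := hflip a1
  have d₂ := hflip a2
  have d₃ := hflip b1
  have d₄ := hflip b2
  rw [one_pow] at d₂ d₃
  rw [hQ.zero_pow] at d₁ d₄
  refine ⟨w₁, w₂, y₁ + e₁ • w₁ + (-hb q y₁ y₂) • w₂, y₂ + e₂ • w₂, hind, hmem, ?_, ?_, ?_, ?_, ?_,
    ?_, ?_, ?_, ?_⟩ <;>
  simp only [hb_add_left, hb_add_right hQ, hb_smul_left, hb_smul_right, a1, a2, a3, b1, b2, b3,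
    c₁, c₂, c₃, c₄, c₅, c₆, d₁, d₂, d₃, d₄, mul_zero, mul_one, add_zero]
  · linear_combination he₁
  · ring
  · linear_combination he₂

/-! ### The `q⁴` planes meeting a given plane in exactly one point -/

/-- The plane spanned by `p`, `u₁ + a w₁ + b w₂` and `u₂ - b^q w₁ + d w₂`. -/
def opp (q : ℕ) (p w₁ w₂ u₁ u₂ : Fin 6 → K) (a b d : K) : Submodule K (Fin 6 → K) :=
  Submodule.span K {p, u₁ + a • w₁ + b • w₂, u₂ + (-b ^ q) • w₁ + d • w₂}

/-- The index set of the planes `opp`: `a` and `d` of trace zero, `b` arbitrary. -/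
def idx (K : Type*) [Field K] [Fintype K] (q : ℕ) : Finset (K × K × K) :=
  (Finset.univ.filter fun a : K => a + a ^ q = 0) ×ˢ Finset.univ ×ˢ
    (Finset.univ.filter fun a : K => a + a ^ q = 0)

lemma card_idx (hQ : QConj K q) : (idx K q).card = q ^ 4 := by
  rw [idx, Finset.card_product, Finset.card_product, hQ.card_trace_zero, Finset.card_univ, hQ.card]
  ring

namespace Frame

variable {W : Submodule K (Fin 6 → K)} {p w₁ w₂ u₁ u₂ : Fin 6 → K}
  (hQ : QConj K q) (hW : ∀ v ∈ W, H5Form K q v = 0) (fr : Frame q W p w₁ w₂ u₁ u₂)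

include fr

lemma p_mem : p ∈ W := (fr.mem p).2 ⟨1, 0, 0, by simp⟩
lemma w₁_mem : w₁ ∈ W := (fr.mem w₁).2 ⟨0, 1, 0, by simp⟩
lemma w₂_mem : w₂ ∈ W := (fr.mem w₂).2 ⟨0, 0, 1, by simp⟩

lemma coeff_zero {α β γ : K} (h : α • p + β • w₁ + γ • w₂ = 0) : α = 0 ∧ β = 0 ∧ γ = 0 := by
  have := Fintype.linearIndependent_iff.1 fr.indep ![γ, β, α] (by
    simp [Fin.sum_univ_three]; rw [← h]; abel)
  exact ⟨this 2, this 1, this 0⟩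

include hQ hW

lemma hb_w₁ (α β γ a b d : K) :
    hb q (α • p + β • (u₁ + a • w₁ + b • w₂) + γ • (u₂ + (-b ^ q) • w₁ + d • w₂)) w₁ = β := by
  have h := @hb_eq_zero _ _ _ _ hQ _ hW
  simp [-neg_smul, hb_add_left, hb_smul_left, h fr.p_mem fr.w₁_mem, h fr.w₁_mem fr.w₁_mem,
    h fr.w₂_mem fr.w₁_mem, fr.u₁w₁, fr.u₂w₁]

lemma hb_w₂ (α β γ a b d : K) :
    hb q (α • p + β • (u₁ + a • w₁ + b • w₂) + γ • (u₂ + (-b ^ q) • w₁ + d • w₂)) w₂ = γ := by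
  have h := @hb_eq_zero _ _ _ _ hQ _ hW
  simp [-neg_smul, hb_add_left, hb_smul_left, h fr.p_mem fr.w₂_mem, h fr.w₁_mem fr.w₂_mem,
    h fr.w₂_mem fr.w₂_mem, fr.u₁w₂, fr.u₂w₂]

lemma opp_inter {a b d : K} {x : Fin 6 → K} (hx : x ∈ opp q p w₁ w₂ u₁ u₂ a b d) (hxW : x ∈ W) :
    ∃ α : K, x = α • p := by
  rw [opp, Submodule.mem_span_triple] at hx
  obtain ⟨α, β, γ, rfl⟩ := hx
  have h := @hb_eq_zero _ _ _ _ hQ _ hW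
  have hβ := fr.hb_w₁ hQ hW α β γ a b d
  have hγ := fr.hb_w₂ hQ hW α β γ a b d
  rw [h hxW fr.w₁_mem] at hβ
  rw [h hxW fr.w₂_mem] at hγ
  exact ⟨α, by rw [← hβ, ← hγ]; simp⟩

lemma opp_finrank (a b d : K) : Module.finrank K (opp q p w₁ w₂ u₁ u₂ a b d) = 3 := by
  have hli : LinearIndependent K ![p, u₁ + a • w₁ + b • w₂, u₂ + (-b ^ q) • w₁ + d • w₂] := by
    rw [Fintype.linearIndependent_iff]
    intro g hg
    simp only [Fin.sum_univ_three, Matrix.cons_val_zero, Matrix.cons_val_one,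
      Matrix.cons_val] at hg
    have hβ := fr.hb_w₁ hQ hW (g 0) (g 1) (g 2) a b d
    have hγ := fr.hb_w₂ hQ hW (g 0) (g 1) (g 2) a b d
    rw [hg] at hβ hγ
    have h0 : ∀ w : Fin 6 → K, hb q 0 w = 0 := fun w => by simp [hb]
    rw [h0] at hβ hγ
    rw [← hβ, ← hγ] at hg
    have hα := (fr.coeff_zero (α := g 0) (β := 0) (γ := 0) (by simpa using hg)).1
    intro i
    fin_cases i
    · exact hα
    · exact hβ.symm
    · exact hγ.symm
  have := finrank_span_eq_card hli
  rw [opp, ← show Fintype.card (Fin 3) = 3 from rfl]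
  have hset : ({p, u₁ + a • w₁ + b • w₂, u₂ + (-b ^ q) • w₁ + d • w₂} : Set (Fin 6 → K)) =
      Set.range ![p, u₁ + a • w₁ + b • w₂, u₂ + (-b ^ q) • w₁ + d • w₂] := by
    ext x; simp [eq_comm]; tauto
  rw [hset]
  exact this

lemma opp_isotropic {a b d : K} (ha : a + a ^ q = 0) (hd : d + d ^ q = 0) :
    ∀ x ∈ opp q p w₁ w₂ u₁ u₂ a b d, H5Form K q x = 0 := by
  intro x hx
  rw [opp, Submodule.mem_span_triple] at hx
  obtain ⟨α, β, γ, rfl⟩ := hx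
  have h := @hb_eq_zero _ _ _ _ hQ _ hW
  have hflip : ∀ {u v : Fin 6 → K} {a : K}, hb q u v = a → hb q v u = a ^ q := fun h => by
    rw [← hb_conj hQ, h]
  have e₁ := hflip fr.u₁p
  have e₂ := hflip fr.u₁w₁
  have e₃ := hflip fr.u₁w₂
  have e₄ := hflip fr.u₂p
  have e₅ := hflip fr.u₂w₁
  have e₆ := hflip fr.u₂w₂
  have e₇ := hflip fr.u₁u₂
  rw [hQ.zero_pow] at e₁ e₃ e₄ e₅ e₇
  rw [one_pow] at e₂ e₆
  rw [H5Form_eq]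
  simp only [hb_add_left, hb_add_right hQ, hb_smul_left, hb_smul_right, hQ.neg, hQ.inv,
    e₁, e₂, e₃, e₄, e₅, e₆, e₇, fr.u₁p, fr.u₁w₁, fr.u₁w₂, fr.u₂p, fr.u₂w₁, fr.u₂w₂, fr.u₁u₁,
    fr.u₁u₂, fr.u₂u₂, h fr.p_mem fr.p_mem, h fr.p_mem fr.w₁_mem, h fr.p_mem fr.w₂_mem,
    h fr.w₁_mem fr.p_mem, h fr.w₁_mem fr.w₁_mem, h fr.w₁_mem fr.w₂_mem,
    h fr.w₂_mem fr.p_mem, h fr.w₂_mem fr.w₁_mem, h fr.w₂_mem fr.w₂_mem, mul_zero, add_zero,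
    zero_add, mul_one]
  linear_combination β * β ^ q * ha + γ * γ ^ q * hd

/-- A vector outside `W` lies in at most `q` of the planes `opp`: once one of the trace-zero
parameters is known, the vector determines the others. -/
lemma opp_fiber {x : Fin 6 → K} (hx : x ∉ W) {s : Finset (K × K × K)} (hs : s ⊆ idx K q)
    (hmem : ∀ t ∈ s, x ∈ opp q p w₁ w₂ u₁ u₂ t.1 t.2.1 t.2.2) : s.card ≤ q := by
  have key : ∀ t ∈ s, ∀ t' ∈ s,
      hb q x w₁ * (t.1 - t'.1) - hb q x w₂ * (t.2.1 - t'.2.1) ^ q = 0 ∧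
      hb q x w₁ * (t.2.1 - t'.2.1) + hb q x w₂ * (t.2.2 - t'.2.2) = 0 := by
    intro t ht t' ht'
    have h1 := hmem t ht
    have h2 := hmem t' ht'
    rw [opp, Submodule.mem_span_triple] at h1 h2
    obtain ⟨α, β, γ, h1⟩ := h1
    obtain ⟨α', β', γ', h2⟩ := h2
    have b1 := fr.hb_w₁ hQ hW α β γ t.1 t.2.1 t.2.2
    have b2 := fr.hb_w₁ hQ hW α' β' γ' t'.1 t'.2.1 t'.2.2
    have g1 := fr.hb_w₂ hQ hW α β γ t.1 t.2.1 t.2.2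
    have g2 := fr.hb_w₂ hQ hW α' β' γ' t'.1 t'.2.1 t'.2.2
    rw [h1] at b1 g1
    rw [h2] at b2 g2
    subst b1 g1
    subst b2 g2
    have := fr.coeff_zero (α := α - α')
      (β := hb q x w₁ * (t.1 - t'.1) - hb q x w₂ * (t.2.1 - t'.2.1) ^ q)
      (γ := hb q x w₁ * (t.2.1 - t'.2.1) + hb q x w₂ * (t.2.2 - t'.2.2)) (by
        rw [hQ.sub]
        rw [← sub_eq_zero.2 (h1.trans h2.symm)]
        module)
    exact this.2
  obtain rfl | ⟨t₀, ht₀⟩ := s.eq_empty_or_nonempty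
  · simp
  have hne : hb q x w₁ ≠ 0 ∨ hb q x w₂ ≠ 0 := by
    by_contra! hcon
    have h1 := hmem t₀ ht₀
    rw [opp, Submodule.mem_span_triple] at h1
    obtain ⟨α, β, γ, h1⟩ := h1
    have b1 := fr.hb_w₁ hQ hW α β γ t₀.1 t₀.2.1 t₀.2.2
    have g1 := fr.hb_w₂ hQ hW α β γ t₀.1 t₀.2.1 t₀.2.2
    rw [h1] at b1 g1
    rw [hcon.1] at b1
    rw [hcon.2] at g1
    subst b1 g1
    refine hx ((fr.mem x).2 ⟨α, 0, 0, ?_⟩)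
    rw [← h1]; module
  have hpow : ∀ y : K, y ^ q = 0 → y = 0 := fun y hy => hQ.pow_inj (hy.trans hQ.zero_pow.symm)
  rcases hne with hne | hne
  · rw [← hQ.card_trace_zero]
    refine Finset.card_le_card_of_injOn (fun t => t.2.2) ?_ ?_
    · intro t ht
      have := hs ht
      simp only [idx, Finset.mem_product] at this
      exact this.2.2
    · intro t ht t' ht' h
      obtain ⟨k1, k2⟩ := key t ht t' ht'
      have h3 : t.2.2 - t'.2.2 = 0 := sub_eq_zero.2 h
      have h2 : t.2.1 - t'.2.1 = 0 := by simpa [h3, hne] using k2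
      have h1 : t.1 - t'.1 = 0 := by simpa [h2, hne, hQ.zero_pow] using k1
      exact Prod.ext (sub_eq_zero.1 h1) (Prod.ext (sub_eq_zero.1 h2) h)
  · rw [← hQ.card_trace_zero]
    refine Finset.card_le_card_of_injOn (fun t => t.1) ?_ ?_
    · intro t ht
      have := hs ht
      simp only [idx, Finset.mem_product] at this
      exact this.1
    · intro t ht t' ht' h
      obtain ⟨k1, k2⟩ := key t ht t' ht'
      have h1 : t.1 - t'.1 = 0 := sub_eq_zero.2 h
      have h2 : t.2.1 - t'.2.1 = 0 := hpow _ (by simpa [h1, hne] using k1)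
      have h3 : t.2.2 - t'.2.2 = 0 := by simpa [h2, hne] using k2
      exact Prod.ext h (Prod.ext (sub_eq_zero.1 h2) (sub_eq_zero.1 h3))

end Frame

/-! ### Points of the variety -/

instance : Finite (H5Point K q) := Subtype.finite

lemma exists_rep (P : H5Point K q) : ∃ v : Fin 6 → K, v ≠ 0 ∧ P.1 = Submodule.span K {v} := by
  have h1 := P.2.1
  obtain ⟨v, hv, hspan⟩ := finrank_eq_one_iff'.1 h1
  refine ⟨v, by simpa using hv, le_antisymm ?_ ?_⟩
  · intro w hw
    obtain ⟨c, hc⟩ := hspan ⟨w, hw⟩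
    exact Submodule.mem_span_singleton.2 ⟨c, congrArg Subtype.val hc⟩
  · rw [Submodule.span_singleton_le_iff_mem]; exact v.2

/-- A vector spanning the point `P`. -/
def rep (P : H5Point K q) : Fin 6 → K := (exists_rep P).choose

lemma rep_ne_zero (P : H5Point K q) : rep P ≠ 0 := (exists_rep P).choose_spec.1

lemma eq_span_rep (P : H5Point K q) : P.1 = Submodule.span K {rep P} :=
  (exists_rep P).choose_spec.2

lemma le_iff_rep (P : H5Point K q) (U : Submodule K (Fin 6 → K)) : P.1 ≤ U ↔ rep P ∈ U := by
  rw [eq_span_rep, Submodule.span_singleton_le_iff_mem]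

/-- A point of the variety outside a plane `π` of the variety is collinear with at most
`q² + 1` points of `π`: they lie on a line. -/
lemma card_collinear_le (hQ : QConj K q) (π : H5Plane K q) {x : Fin 6 → K} (hx : x ∉ π.1)
    (s : Finset (H5Point K q)) (hs : ∀ P ∈ s, P.1 ≤ π.1 ∧ hb q x (rep P) = 0) :
    s.card ≤ q ^ 2 + 1 := by
  let f : π.1 →ₗ[K] K := (hbL q x).domRestrict π.1
  have hf : f ≠ 0 := by
    intro h
    refine hx (mem_of_orthogonal hQ π.2.1 π.2.2 fun w hw => ?_)
    have : hb q w x = 0 := LinearMap.congr_fun h ⟨w, hw⟩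
    rw [← hb_conj hQ, this, hQ.zero_pow]
  have hr := LinearMap.finrank_range_add_finrank_ker f
  rw [LinearMap.range_eq_top.2 (LinearMap.surjective hf), π.2.1] at hr
  simp only [finrank_top, Module.finrank_self] at hr
  have h2 : Module.finrank K (LinearMap.ker f) = 2 := by omega
  have hmem : ∀ P ∈ s, ∃ v : LinearMap.ker f, ((v : π.1) : Fin 6 → K) = rep P := by
    intro P hP
    obtain ⟨h1, h2⟩ := hs P hP
    refine ⟨⟨⟨rep P, (le_iff_rep _ _).1 h1⟩, ?_⟩, rfl⟩
    rw [LinearMap.mem_ker]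
    change hb q (rep P) x = 0
    rw [← hb_conj hQ, h2, hQ.zero_pow]
  choose v hv using hmem
  have hv0 : ∀ P hP, v P hP ≠ 0 := by
    intro P hP h
    apply rep_ne_zero P
    rw [← hv P hP, h]; rfl
  have hcard := Projectivization.card_of_finrank_two K (LinearMap.ker f) h2
  rw [Nat.card_eq_fintype_card (α := K), hQ.card] at hcard
  rw [← hcard, ← Fintype.card_coe, ← Nat.card_eq_fintype_card]
  have : Finite (Projectivization K (LinearMap.ker f)) := Quotient.finite _
  refine Nat.card_le_card_of_injective
    (fun P : s => Projectivization.mk K (v P.1 P.2) (hv0 P.1 P.2)) ?_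
  rintro ⟨P, hP⟩ ⟨P', hP'⟩ h
  rw [Projectivization.mk_eq_mk_iff'] at h
  obtain ⟨a, ha⟩ := h
  have ha' : a • rep P' = rep P := by
    rw [← hv P hP, ← hv P' hP', ← ha]; rfl
  have hle : P.1 ≤ P'.1 := by
    rw [le_iff_rep, ← ha']
    exact P'.1.smul_mem _ ((le_iff_rep P' P'.1).1 le_rfl)
  have := Submodule.eq_of_le_of_finrank_eq hle (P.2.1.trans P'.2.1.symm)
  exact Subtype.ext (Subtype.ext this)

/-- A plane of the variety through a support point of a dual codeword contains another
support point. -/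
lemma exists_other_support {p : ℕ} {c : H5Point K q → ZMod p}
    (hc : ∀ π : H5Plane K q, ∑ᶠ P ∈ {P : H5Point K q | P.1 ≤ π.1}, c P = 0)
    (U : H5Plane K q) {P : H5Point K q} (hP : c P ≠ 0) (hPU : P.1 ≤ U.1) :
    ∃ Q : H5Point K q, c Q ≠ 0 ∧ Q.1 ≤ U.1 ∧ Q ≠ P := by
  by_contra! hcon
  apply hP
  rw [← hc U, ← finsum_mem_inter_support]
  have : {Q : H5Point K q | Q.1 ≤ U.1} ∩ Function.support c = {P} := by
    ext Q
    simp only [Set.mem_inter_iff, Set.mem_ofPred_eq, Function.mem_support, Set.mem_singleton_iff]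
    exact ⟨fun h => hcon Q h.2 h.1, by rintro rfl; exact ⟨hPU, hP⟩⟩
  rw [this, finsum_mem_singleton]

/-- A support point `P` of the plane `π` is collinear with at least `q³` support points
outside `π`. -/
lemma le_card_collinear (hQ : QConj K q) {p : ℕ} {c : H5Point K q → ZMod p}
    (hc : ∀ π : H5Plane K q, ∑ᶠ P ∈ {P : H5Point K q | P.1 ≤ π.1}, c P = 0)
    (π : H5Plane K q) {P : H5Point K q} (hP : c P ≠ 0) (hPπ : P.1 ≤ π.1)
    (T : Finset (H5Point K q))
    (hT : ∀ Q, c Q ≠ 0 → ¬ Q.1 ≤ π.1 → hb q (rep Q) (rep P) = 0 → Q ∈ T)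
    (hT' : ∀ Q ∈ T, ¬ Q.1 ≤ π.1) : q ^ 3 ≤ T.card := by
  obtain ⟨w₁, w₂, u₁, u₂, fr⟩ :=
    exists_frame hQ π.2.1 π.2.2 ((le_iff_rep P _).1 hPπ) (rep_ne_zero P)
  have hex : ∀ t ∈ idx K q, ∃ Q ∈ T, rep Q ∈ opp q (rep P) w₁ w₂ u₁ u₂ t.1 t.2.1 t.2.2 := by
    intro t ht
    simp only [idx, Finset.mem_product, Finset.mem_filter, Finset.mem_univ, true_and] at ht
    have hiso := fr.opp_isotropic hQ π.2.2 (b := t.2.1) ht.1 ht.2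
    have hPU : rep P ∈ opp q (rep P) w₁ w₂ u₁ u₂ t.1 t.2.1 t.2.2 :=
      Submodule.subset_span (by simp)
    obtain ⟨Q, hcQ, hQU, hne⟩ := exists_other_support hc
      ⟨_, fr.opp_finrank hQ π.2.2 t.1 t.2.1 t.2.2, hiso⟩ hP ((le_iff_rep P _).2 hPU)
    rw [le_iff_rep] at hQU
    refine ⟨Q, hT Q hcQ ?_ (hb_eq_zero hQ hiso hQU hPU), hQU⟩
    intro hQπ
    obtain ⟨α, hα⟩ := fr.opp_inter hQ π.2.2 hQU ((le_iff_rep Q _).1 hQπ)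
    have hle : Q.1 ≤ P.1 := by
      rw [le_iff_rep, hα]
      exact P.1.smul_mem _ ((le_iff_rep P P.1).1 le_rfl)
    exact hne (Subtype.ext (Submodule.eq_of_le_of_finrank_eq hle (Q.2.1.trans P.2.1.symm)))
  have : Nonempty (H5Point K q) := ⟨P⟩
  choose! g hgT hg using hex
  -- Each of the `q⁴` planes `opp` contains a point `g t ∈ T`, and every value of `g` is taken at
  -- most `q` times.
  have h := Finset.card_le_mul_card_image_of_maps_to (f := g) hgT q (fun Q hQT => by
    refine fr.opp_fiber hQ π.2.2 (x := rep Q) (fun h => hT' Q hQT ((le_iff_rep Q _).2 h))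
      (Finset.filter_subset _ _) fun t ht => ?_
    obtain ⟨h1, rfl⟩ := Finset.mem_filter.1 ht
    exact hg t h1)
  rw [card_idx hQ] at h
  have h2 := hQ.two_le
  exact Nat.le_of_mul_le_mul_left (by rw [← pow_succ']; exact h) (by omega)

lemma qConj_of_card {p q h : ℕ} (hp : p.Prime) [CharP K p] (hh : 0 < h) (hq : q = p ^ h)
    (hK : Fintype.card K = q ^ 2) : QConj K q where
  two_le := by
    rw [hq]; exact hp.two_le.trans (Nat.le_self_pow hh.ne' p)
  card := hK
  add x y := by
    have := Fact.mk hp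
    rw [hq]; exact add_pow_char_pow x y p h
  inv x := by rw [← pow_mul, ← sq, ← hK, FiniteField.pow_card]

end

/-- Let `c` be a codeword of the `p`-ary dual code of points and planes of `H(5,q²)` of
weight at most `2(q³+q²)`. Then every plane of `H(5,q²)` contains at most `2q²+2q+2`
points of the support of `c`. -/
theorem dual_code_H5_plane_support_bound (p q h : ℕ) (hp : p.Prime) [CharP K p]
    (hh : 0 < h) (hq : q = p ^ h) (hK : Fintype.card K = q ^ 2)
    (c : H5Point K q → ZMod p)
    (hc : ∀ π : H5Plane K q, ∑ᶠ P ∈ {P : H5Point K q | P.1 ≤ π.1}, c P = 0)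
    (hwt : Set.ncard {P : H5Point K q | c P ≠ 0} ≤ 2 * (q ^ 3 + q ^ 2))
    (π : H5Plane K q) :
    Set.ncard {P : H5Point K q | c P ≠ 0 ∧ P.1 ≤ π.1} ≤ 2 * q ^ 2 + 2 * q + 2 := by
  have hQ := qConj_of_card hp hh hq hK
  have := Fintype.ofFinite (H5Point K q)
  set X : Finset (H5Point K q) := Finset.univ.filter fun P => c P ≠ 0 ∧ P.1 ≤ π.1 with hX
  set S : Finset (H5Point K q) := Finset.univ.filter fun P => c P ≠ 0 ∧ ¬ P.1 ≤ π.1 with hS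
  have hXc : Set.ncard {P : H5Point K q | c P ≠ 0 ∧ P.1 ≤ π.1} = X.card := by
    rw [← Set.ncard_coe_finset]; congr 1; ext P; simp [hX]
  have hsum : X.card + S.card = Set.ncard {P : H5Point K q | c P ≠ 0} := by
    rw [← Finset.card_union_of_disjoint, ← Set.ncard_coe_finset]
    · congr 1; ext P; simp [hX, hS]; tauto
    · rw [Finset.disjoint_left]; intro P h1 h2
      exact (Finset.mem_filter.1 h2).2.2 (Finset.mem_filter.1 h1).2.2
  rw [hXc]
  -- Double count the collinear pairs `(P, Q)` of support points, `P` in `π` and `Q` outside `π`.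
  let r : H5Point K q → H5Point K q → Prop := fun P Q => hb q (rep Q) (rep P) = 0
  have hdc := Finset.sum_card_bipartiteAbove_eq_sum_card_bipartiteBelow (s := X) (t := S) r
  have hlow : X.card * q ^ 3 ≤ ∑ P ∈ X, (S.bipartiteAbove r P).card := by
    rw [← smul_eq_mul]
    refine Finset.card_nsmul_le_sum _ _ _ fun P hP => ?_
    obtain ⟨-, hP, hPπ⟩ := Finset.mem_filter.1 hP
    refine le_card_collinear hQ hc π hP hPπ _ (fun Q h1 h2 h3 => ?_) fun Q h => ?_
    · simp [Finset.mem_bipartiteAbove, hS, r, h1, h2, h3]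
    · exact (Finset.mem_filter.1 ((Finset.mem_bipartiteAbove r).1 h).1).2.2
  have hupp : ∑ Q ∈ S, (X.bipartiteBelow r Q).card ≤ S.card * (q ^ 2 + 1) := by
    rw [← smul_eq_mul]
    refine Finset.sum_le_card_nsmul _ _ _ fun Q hQS => ?_
    have hQπ := (Finset.mem_filter.1 hQS).2.2
    refine card_collinear_le hQ π (x := rep Q) (fun h => hQπ ((le_iff_rep Q _).2 h)) _
      fun P hP => ?_
    obtain ⟨h1, h2⟩ := (Finset.mem_bipartiteBelow r).1 hP
    exact ⟨(Finset.mem_filter.1 h1).2.2, h2⟩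
  rw [← hsum] at hwt
  -- Keeping the term `X.card * (q² + 1)` is what makes the bound hold for `q = 2` too: without it
  -- the quotient is `2q² + 2q + 2 + 2/q`.
  have hmain : X.card * (q ^ 3 + q ^ 2 + 1) ≤ 2 * (q ^ 3 + q ^ 2) * (q ^ 2 + 1) := by
    have := Nat.mul_le_mul_right (q ^ 2 + 1) hwt
    nlinarith
  by_contra! hlt
  have hlt' : 2 * q ^ 2 + 2 * q + 3 ≤ X.card := hlt
  have := Nat.mul_le_mul_right (q ^ 3 + q ^ 2 + 1) hlt'
  nlinarith [Nat.zero_le (q ^ 4), Nat.zero_le (q ^ 3), Nat.zero_le (q ^ 2)]
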